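/- arXiv:1512.06460 — 7 statements merged into one kernel-verified Lean document; each statement's English description precedes it below -/
import Mathlib

section
/- Let k ≥ 1, let 0 < c₀ < 1, and let A : E → ℝ be a C² function on the k-dimensional Euclidean space E such that for every u in the closed unit ball B̄ and every v ∈ E one has D²A(u)(v,v) ≤ -c₀·‖v‖². Suppose m ∈ B̄ satisfies ∇A(m) = 0 and ‖m‖ ≤ c₀/√10. Then for every u ∈ E with ‖u‖ = 1 one has A(u) < A(m) - c₀/5; in particular the supremum of A over the unit sphere is strictly less than the maximum of A over B̄ minus c₀/5. -/
/-!
Restrict `A` to the segment `t ↦ m + t • v`, `v = u - m`, which stays in the closed unit ball.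
The restriction has zero derivative at `t = 0` and second derivative at most `-c₀ ‖v‖²`, so two
integrations (`le_quadratic_of_second_deriv_le`) give `A u ≤ A m - c₀ ‖v‖² / 2`.
Since `‖m‖ ≤ c₀ / √10 < 1/3`, one has `‖v‖ > 2/3`, and `(2/3)² / 2 = 2/9 > 1/5`.
-/

/-- If `f' ≤ 0` on `[0, 1]`, then `f` does not increase from `0` to any `t ∈ [0, 1]`. -/
lemma le_zero_value_of_deriv_nonpos {f f' : ℝ → ℝ} (hf : ∀ t, HasDerivAt f (f' t) t)
    (hf' : ∀ t ∈ Set.Icc (0 : ℝ) 1, f' t ≤ 0) :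
    ∀ t ∈ Set.Icc (0 : ℝ) 1, f t ≤ f 0 := by
  have hanti : AntitoneOn f (Set.Icc 0 1) := by
    refine antitoneOn_of_deriv_nonpos (convex_Icc 0 1)
      (fun t _ => (hf t).continuousAt.continuousWithinAt)
      (fun t _ => (hf t).differentiableAt.differentiableWithinAt) fun t ht => ?_
    rw [(hf t).deriv]
    exact hf' t (interior_subset ht)
  intro t ht
  exact hanti (Set.left_mem_Icc.2 zero_le_one) ht ht.1

/-- One-variable Taylor bound: a vanishing first derivative at `0` and a second derivative at most
`-C` on `[0, 1]` force a drop of at least `C / 2`. -/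
lemma le_quadratic_of_second_deriv_le {g g' g'' : ℝ → ℝ} {C : ℝ}
    (hg : ∀ t, HasDerivAt g (g' t) t) (hg' : ∀ t, HasDerivAt g' (g'' t) t) (h0 : g' 0 = 0)
    (hC : ∀ t ∈ Set.Icc (0 : ℝ) 1, g'' t ≤ -C) : g 1 ≤ g 0 - C / 2 := by
  have h1 := le_zero_value_of_deriv_nonpos (f := fun t => g' t + C * t) (f' := fun t => g'' t + C)
    (fun t => by simpa using (hg' t).fun_add ((hasDerivAt_id t).const_mul C))
    (fun t ht => by linarith [hC t ht])
  have h2 := le_zero_value_of_deriv_nonpos (f := fun t => g t + C / 2 * t ^ 2)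
    (f' := fun t => g' t + C * t)
    (fun t => by
      refine ((hg t).fun_add ((hasDerivAt_pow 2 t).const_mul (C / 2))).congr_deriv ?_
      norm_num
      ring)
    (fun t ht => by simpa [h0] using h1 t ht) 1 (by simp)
  norm_num at h2
  linarith

/-- Boundary estimate from the proof of Lemma 4.5: if the Hessian of `A` is bounded
above by `-c₀·Id` on the closed unit ball and the critical point `m` satisfies
`‖m‖ ≤ c₀/√10`, then `A(u) < A(m) - c₀/5` for every unit vector `u`. -/
theorem stmt_2 (k : ℕ) (hk : 1 ≤ k) (c₀ : ℝ) (hc₀ : 0 < c₀) (hc₀' : c₀ < 1)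
    (A : EuclideanSpace ℝ (Fin k) → ℝ) (hA : ContDiff ℝ 2 A)
    (hHess : ∀ u ∈ Metric.closedBall (0 : EuclideanSpace ℝ (Fin k)) 1,
      ∀ v : EuclideanSpace ℝ (Fin k),
        iteratedFDeriv ℝ 2 A u ![v, v] ≤ -c₀ * ‖v‖ ^ 2)
    (m : EuclideanSpace ℝ (Fin k))
    (hm : m ∈ Metric.closedBall (0 : EuclideanSpace ℝ (Fin k)) 1)
    (hgrad : gradient A m = 0)
    (hmsmall : ‖m‖ ≤ c₀ / Real.sqrt 10) :
    ∀ u : EuclideanSpace ℝ (Fin k), ‖u‖ = 1 → A u < A m - c₀ / 5 := by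
  intro u hu
  set v := u - m with hv
  have hline : ∀ t : ℝ, HasDerivAt (fun s : ℝ => m + s • v) v t := fun t => by
    simpa using ((hasDerivAt_id t).smul_const v).const_add m
  have hd1 : Differentiable ℝ A := hA.differentiable (by norm_num)
  have hd2 : Differentiable ℝ (fderiv ℝ A) :=
    (hA.fderiv_right (m := 1) (by norm_num)).differentiable (by norm_num)
  have hg : ∀ t : ℝ, HasDerivAt (fun s : ℝ => A (m + s • v)) (fderiv ℝ A (m + t • v) v) t :=
    fun t => (hd1 _).hasFDerivAt.comp_hasDerivAt t (hline t)
  have hg' : ∀ t : ℝ, HasDerivAt (fun s : ℝ => fderiv ℝ A (m + s • v) v)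
      (fderiv ℝ (fderiv ℝ A) (m + t • v) v v) t := fun t => by
    have h := (hd2 _).hasFDerivAt.comp_hasDerivAt t (hline t)
    simpa using h.clm_apply (hasDerivAt_const t v)
  have hfd : fderiv ℝ A m = 0 := by
    simpa [gradient] using hgrad
  have key := le_quadratic_of_second_deriv_le (C := c₀ * ‖v‖ ^ 2) hg hg' (by simp [hfd])
    (fun t ht => by
      have hmem : m + t • v ∈ Metric.closedBall (0 : EuclideanSpace ℝ (Fin k)) 1 :=
        (convex_closedBall 0 1).add_smul_sub_mem hm (by simp [hu]) ht
      have h := hHess _ hmem v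
      rw [iteratedFDeriv_two_apply] at h
      simpa using h)
  have hend : m + (1 : ℝ) • v = u := by simp [hv]
  simp only [hend, zero_smul, add_zero] at key
  have hm3 : ‖m‖ < 1 / 3 := by
    have h3 : (3 : ℝ) < √10 := Real.lt_sqrt_of_sq_lt (by norm_num)
    refine hmsmall.trans_lt ?_
    rw [div_lt_div_iff₀ (by linarith) (by norm_num)]
    linarith
  have hv3 : 2 / 3 < ‖v‖ := by
    have := norm_sub_norm_le u m
    rw [hu] at this
    linarith
  have hsq : 4 / 9 < ‖v‖ ^ 2 := by nlinarith
  nlinarith [mul_lt_mul_of_pos_left hsq hc₀]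
end

section
/- Let k ≥ 1, let 0 < c₀ < 1, and let A : E → ℝ be a C² function on the k-dimensional Euclidean space E such that for every u in the closed unit ball B̄ and every v ∈ E one has D²A(u)(v,v) ≥ -(1/c₀)·‖v‖². Suppose m ∈ B̄ satisfies ∇A(m) = 0 and ‖m‖ ≤ c₀/√10. Then every w ∈ E with ‖w‖ ≤ c₀/4 satisfies A(w) > A(m) - c₀/5. -/
/-!
Along the segment from `m` to `w`, which stays in the unit ball by convexity, the Hessian bound
and the vanishing of the derivative at `m` give the second-order Taylor estimate
`A w ≥ A m - ‖w - m‖² / (2 c₀)` (`quadratic_lower_bound`). Since `‖w - m‖ ≤ c₀ (1/4 + 1/√10)` and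
`(1/4 + 1/√10)² < 2/5`, the loss is strictly smaller than `c₀ / 5`.
-/

/-- Second-order Taylor lower bound at a critical point. Integrating
`d²/dt² A (m + t (w - m)) ≥ -C ‖w - m‖²` twice over `[0, 1]` is expressed as monotonicity
of the corrected functions `g' t + C ‖w - m‖² t` and `g t + C ‖w - m‖² t² / 2`. -/
lemma quadratic_lower_bound {F : Type*} [NormedAddCommGroup F] [NormedSpace ℝ F]
    {A : F → ℝ} (hA : ContDiff ℝ 2 A) {s : Set F} (hs : Convex ℝ s) {C : ℝ}
    (hHess : ∀ u ∈ s, ∀ v : F, -C * ‖v‖ ^ 2 ≤ iteratedFDeriv ℝ 2 A u ![v, v])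
    {m w : F} (hm : m ∈ s) (hw : w ∈ s) (hcrit : fderiv ℝ A m = 0) :
    A m - C * ‖w - m‖ ^ 2 / 2 ≤ A w := by
  set v := w - m with hv
  set K := C * ‖v‖ ^ 2 with hK
  have hline : ∀ t : ℝ, HasDerivAt (fun t : ℝ => m + t • v) v t := fun t => by
    simpa using ((hasDerivAt_id t).smul_const v).const_add m
  have hg : ∀ t : ℝ, HasDerivAt (fun t : ℝ => A (m + t • v)) (fderiv ℝ A (m + t • v) v) t :=
    fun t => ((hA.differentiable (by norm_num)) _).hasFDerivAt.comp_hasDerivAt t (hline t)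
  have hA' : Differentiable ℝ (fderiv ℝ A) :=
    (hA.fderiv_right (m := 1) (by norm_num)).differentiable (by norm_num)
  have hg' : ∀ t : ℝ, HasDerivAt (fun t : ℝ => fderiv ℝ A (m + t • v) v)
      (fderiv ℝ (fderiv ℝ A) (m + t • v) v v) t := fun t => by
    simpa using ((hA' _).hasFDerivAt.comp_hasDerivAt t (hline t)).clm_apply (hasDerivAt_const t v)
  have hseg : ∀ t ∈ Set.Icc (0 : ℝ) 1, m + t • v ∈ s := fun t ht =>
    hs.add_smul_sub_mem hm hw ht
  have hφ : ∀ t : ℝ, HasDerivAt (fun t : ℝ => fderiv ℝ A (m + t • v) v + K * t)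
      (fderiv ℝ (fderiv ℝ A) (m + t • v) v v + K) t := fun t => by
    exact ((hg' t).add ((hasDerivAt_id t).const_mul K)).congr_deriv (by simp)
  have hφmono : MonotoneOn (fun t : ℝ => fderiv ℝ A (m + t • v) v + K * t) (Set.Icc 0 1) := by
    refine monotoneOn_of_deriv_nonneg (convex_Icc 0 1)
      (fun t _ => (hφ t).continuousAt.continuousWithinAt)
      (fun t _ => (hφ t).differentiableAt.differentiableWithinAt) fun t ht => ?_
    have h := hHess _ (hseg t (interior_subset ht)) v
    rw [iteratedFDeriv_two_apply] at h
    simp only [Matrix.cons_val_zero, Matrix.cons_val_one] at h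
    rw [(hφ t).deriv]
    linarith
  have hψ : ∀ t : ℝ, HasDerivAt (fun t : ℝ => A (m + t • v) + K / 2 * t ^ 2)
      (fderiv ℝ A (m + t • v) v + K * t) t := fun t => by
    refine ((hg t).add (((hasDerivAt_id t).pow 2).const_mul (K / 2))).congr_deriv ?_
    simp
    ring
  have hψmono : MonotoneOn (fun t : ℝ => A (m + t • v) + K / 2 * t ^ 2) (Set.Icc 0 1) := by
    refine monotoneOn_of_deriv_nonneg (convex_Icc 0 1)
      (fun t _ => (hψ t).continuousAt.continuousWithinAt)
      (fun t _ => (hψ t).differentiableAt.differentiableWithinAt) fun t ht => ?_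
    have ht' := interior_subset ht
    have h := hφmono (Set.left_mem_Icc.2 zero_le_one) ht' ht'.1
    rw [(hψ t).deriv]
    simpa [hcrit] using h
  have h := hψmono (Set.left_mem_Icc.2 zero_le_one) (Set.right_mem_Icc.2 zero_le_one) zero_le_one
  simp [hv] at h
  linarith

/-- Second inequality of Lemma 4.5: if the Hessian of `A` is bounded below by
`-(1/c₀)·Id` on the closed unit ball and the critical point `m` satisfies
`‖m‖ ≤ c₀/√10`, then `A(w) > A(m) - c₀/5` whenever `‖w‖ ≤ c₀/4`. -/
theorem stmt_3 (k : ℕ) (hk : 1 ≤ k) (c₀ : ℝ) (hc₀ : 0 < c₀) (hc₀' : c₀ < 1)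
    (A : EuclideanSpace ℝ (Fin k) → ℝ) (hA : ContDiff ℝ 2 A)
    (hHess : ∀ u ∈ Metric.closedBall (0 : EuclideanSpace ℝ (Fin k)) 1,
      ∀ v : EuclideanSpace ℝ (Fin k),
        -(1 / c₀) * ‖v‖ ^ 2 ≤ iteratedFDeriv ℝ 2 A u ![v, v])
    (m : EuclideanSpace ℝ (Fin k))
    (hm : m ∈ Metric.closedBall (0 : EuclideanSpace ℝ (Fin k)) 1)
    (hgrad : gradient A m = 0)
    (hmsmall : ‖m‖ ≤ c₀ / Real.sqrt 10) :
    ∀ w : EuclideanSpace ℝ (Fin k), ‖w‖ ≤ c₀ / 4 → A m - c₀ / 5 < A w := by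
  intro w hw
  have hcrit : fderiv ℝ A m = 0 := by
    simpa [gradient] using hgrad
  have hwball : w ∈ Metric.closedBall (0 : EuclideanSpace ℝ (Fin k)) 1 := by
    rw [mem_closedBall_zero_iff]
    linarith
  have hquad := quadratic_lower_bound hA (convex_closedBall _ _) hHess hm hwball hcrit
  -- `1/√10 ≤ 1/3` gives `‖w - m‖ ≤ (7/12) c₀`, and `(7/12)² = 49/144 < 2/5`.
  have hm3 : ‖m‖ ≤ c₀ / 3 := by
    refine hmsmall.trans ?_
    gcongr
    exact Real.le_sqrt_of_sq_le (by norm_num)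
  have hdist : ‖w - m‖ ≤ 7 / 12 * c₀ := by
    have := norm_sub_le w m
    linarith
  have hsq : 1 / c₀ * ‖w - m‖ ^ 2 ≤ 49 / 144 * c₀ := by
    calc 1 / c₀ * ‖w - m‖ ^ 2 ≤ 1 / c₀ * (7 / 12 * c₀) ^ 2 := by gcongr
      _ = 49 / 144 * c₀ := by field_simp; norm_num
  linarith
end

section
/- Let k ≥ 1 and let A : E → ℝ be a C² function on the k-dimensional Euclidean space E. For every point v in the closed unit ball B̄ there exists a curve γ : ℝ → E with γ(0) = v such that for every t ≥ 0, γ(t) ∈ B̄ and γ has derivative -(1 - ‖γ(t)‖²)·∇A(γ(t)) at t (i.e., γ is a global-in-forward-time integral curve of the vector field u ↦ -(1 - ‖u‖²)·∇A(u) that remains in the closed unit ball). -/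
/-!
Multiply the field `u ↦ -(1 - ‖u‖²) ∇A(u)` by a smooth cutoff equal to `1` on the closed unit ball.
The result is `C¹` with compact support, hence bounded and globally Lipschitz, so it has an integral
curve through `v` defined for all times (`exists_integralCurve_of_bounded_lipschitz`). If this curve
left the closed ball, it would meet the unit sphere at some time; but the points of the sphere are
zeros of the field, so by uniqueness the curve would be constant and stay on the sphere. Hence
it remains in the closed ball, where the cutoff field is the original one.
-/

open Set Filter Topology

/-- Boundedness allows Picard–Lindelöf on `[-r, r]` for every `r` at once (use a ball of radius
`L * r`); uniqueness glues the resulting curves. -/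
lemma exists_integralCurve_of_bounded_lipschitz {E : Type*} [NormedAddCommGroup E]
    [NormedSpace ℝ E] [CompleteSpace E] {F : E → E} {K L : NNReal}
    (hK : LipschitzWith K F) (hL : ∀ x, ‖F x‖ ≤ L) (v : E) :
    ∃ γ : ℝ → E, γ 0 = v ∧ ∀ t, HasDerivAt γ (F (γ t)) t := by
  have hloc : ∀ r : ℝ, ∃ α : ℝ → E, 0 < r →
      α 0 = v ∧ ∀ t ∈ Ioo (-r) r, HasDerivAt α (F (α t)) t := by
    intro r
    by_cases hr : 0 < r
    · have hPL : IsPicardLindelof (fun _ ↦ F) (⟨0, by simp [hr.le]⟩ : Icc (-r) r) v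
          (L * r.toNNReal) 0 L K := by
        refine .of_time_independent (fun x _ ↦ hL x) hK.lipschitzOnWith ?_
        simp [hr.le]
      obtain ⟨α, h0, hα⟩ := hPL.exists_eq_forall_mem_Icc_hasDerivWithinAt₀
      exact ⟨α, fun _ ↦ ⟨h0, fun t ht ↦
        (hα t (Ioo_subset_Icc_self ht)).hasDerivAt (Icc_mem_nhds ht.1 ht.2)⟩⟩
    · exact ⟨fun _ ↦ v, fun h ↦ absurd h hr⟩
  choose α hα using hloc
  have heq : ∀ r s t : ℝ, |t| < r → r ≤ s → α r t = α s t := by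
    intro r s t htr hrs
    have hr : 0 < r := (abs_nonneg t).trans_lt htr
    refine ODE_solution_unique_of_mem_Ioo (v := fun _ ↦ F) (s := fun _ ↦ univ) (t₀ := 0)
      (a := -r) (b := r) (fun _ _ ↦ hK.lipschitzOnWith) (by simp [hr])
      (fun t ht ↦ ⟨(hα r hr).2 t ht, mem_univ _⟩)
      (fun t ht ↦ ⟨(hα s (hr.trans_le hrs)).2 t ?_, mem_univ _⟩) ?_ (abs_lt.1 htr)
    · exact ⟨by linarith [ht.1], by linarith [ht.2]⟩
    · rw [(hα r hr).1, (hα s (hr.trans_le hrs)).1]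
  refine ⟨fun t ↦ α (|t| + 1) t, (hα _ (by positivity)).1, fun t ↦ ?_⟩
  have hev : (fun u ↦ α (|u| + 1) u) =ᶠ[𝓝 t] α (|t| + 2) := by
    filter_upwards [continuous_abs.continuousAt.eventually_lt_const (lt_add_one |t|)] with u hu
    exact heq _ _ _ (lt_add_one _) (by linarith)
  have hd := (hα (|t| + 2) (by positivity)).2 t (abs_lt.1 (by linarith))
  rw [← hev.self_of_nhds] at hd
  exact hd.congr_of_eventuallyEq hev

lemma contDiff_gradient {E : Type*} [NormedAddCommGroup E] [InnerProductSpace ℝ E]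
    [CompleteSpace E] {A : E → ℝ} (hA : ContDiff ℝ 2 A) : ContDiff ℝ 1 (gradient A) :=
  (InnerProductSpace.toDual ℝ E).symm.contDiff.comp (hA.fderiv_right (by norm_num))

/-- Existence of the one-parameter flow of `u ↦ -(1-‖u‖²)·∇A(u)` used in Section 4:
starting from any point of the closed unit ball there is a forward-in-time integral
curve that stays in the closed unit ball for all `t ≥ 0`. -/
theorem stmt_4 (k : ℕ) (hk : 1 ≤ k)
    (A : EuclideanSpace ℝ (Fin k) → ℝ) (hA : ContDiff ℝ 2 A) :
    ∀ v ∈ Metric.closedBall (0 : EuclideanSpace ℝ (Fin k)) 1,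
      ∃ γ : ℝ → EuclideanSpace ℝ (Fin k), γ 0 = v ∧
        ∀ t : ℝ, 0 ≤ t →
          γ t ∈ Metric.closedBall (0 : EuclideanSpace ℝ (Fin k)) 1 ∧
          HasDerivAt γ (-(1 - ‖γ t‖ ^ 2) • gradient A (γ t)) t := by
  intro v hv
  let χ : ContDiffBump (0 : EuclideanSpace ℝ (Fin k)) := ⟨1, 2, one_pos, one_lt_two⟩
  let F : EuclideanSpace ℝ (Fin k) → EuclideanSpace ℝ (Fin k) :=
    fun u ↦ χ u • (-(1 - ‖u‖ ^ 2) • gradient A u)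
  have hF : ContDiff ℝ 1 F :=
    χ.contDiff.smul
      ((contDiff_const.sub (contDiff_norm_sq ℝ)).neg.smul (contDiff_gradient hA))
  have hFc : HasCompactSupport F := χ.hasCompactSupport.smul_right
  obtain ⟨K, hK⟩ := hF.lipschitzWith_of_hasCompactSupport hFc one_ne_zero
  obtain ⟨L, hL⟩ := hFc.exists_bound_of_continuous hF.continuous
  obtain ⟨γ, h0, hγ⟩ := exists_integralCurve_of_bounded_lipschitz (L := L.toNNReal) hK
    (fun x ↦ (hL x).trans (Real.le_coe_toNNReal L)) v
  have hmem : ∀ t, 0 ≤ t → ‖γ t‖ ≤ 1 := by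
    intro t ht
    by_contra! hlt
    have hcont : Continuous fun s ↦ ‖γ s‖ :=
      (continuous_iff_continuousAt.2 fun s ↦ (hγ s).continuousAt).norm
    obtain ⟨s, -, hs⟩ := intermediate_value_Icc ht hcont.continuousOn
      (show (1 : ℝ) ∈ Icc ‖γ 0‖ ‖γ t‖ from ⟨by simpa [h0] using hv, hlt.le⟩)
    have hs : ‖γ s‖ = 1 := hs
    have hzero : F (γ s) = 0 := by simp [F, hs]
    have hconst : γ = fun _ ↦ γ s :=
      ODE_solution_unique_univ (v := fun _ ↦ F) (s := fun _ ↦ univ) (t₀ := s)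
        (fun _ ↦ hK.lipschitzOnWith) (fun t ↦ ⟨hγ t, mem_univ _⟩)
        (fun t ↦ ⟨by simpa only [hzero] using hasDerivAt_const t (γ s), mem_univ _⟩) rfl
    rw [congrFun hconst t, hs] at hlt
    exact lt_irrefl _ hlt
  refine ⟨γ, h0, fun t ht ↦ ?_⟩
  have hball : γ t ∈ Metric.closedBall (0 : EuclideanSpace ℝ (Fin k)) 1 := by
    simpa using hmem t ht
  refine ⟨hball, ?_⟩
  have hχ : χ (γ t) = 1 := χ.one_of_mem_closedBall hball
  simpa only [F, hχ, one_smul] using hγ t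
end

section
/- Let k ≥ 1, let c₀ > 0, and let A : E → ℝ be a C² function on the k-dimensional Euclidean space E such that for every u in the closed unit ball B̄ and every v ∈ E one has D²A(u)(v,v) ≤ -c₀·‖v‖². Let m be a point of the open unit ball with ∇A(m) = 0. Suppose γ : ℝ → E satisfies: γ(t) ∈ B̄ for all t ≥ 0 and γ has derivative -(1 - ‖γ(t)‖²)·∇A(γ(t)) at every t ≥ 0, and γ(0) ≠ m. Then ‖γ(t)‖ → 1 as t → +∞. -/
/-!
Write `φ t = ‖γ t - m‖²` and `s t = 1 - ‖γ t‖² ≥ 0`. The Hessian bound, integrated along the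
segment from `m` to `u`, gives `⟪∇A(u), u - m⟫ ≤ -c₀ ‖u - m‖²` (`inner_gradient_sub_le`), so
`φ' ≥ 2 c₀ s φ ≥ 0`. Hence `φ` is nondecreasing and bounded, so it converges, and
`φ' ≥ 2 c₀ φ(0) s` with `φ(0) > 0`. On the other hand `s' = 2 s ⟪γ, ∇A(γ)⟫ ≥ -2 M s`, where `M` bounds
`|⟪u, ∇A(u)⟫|` on the closed ball, so `φ + K s` is nondecreasing for `K = c₀ φ(0) / M`.
The mean value theorem provides `ξ ∈ (t, t + 1)` with `φ(t + 1) - φ(t) ≥ 2 c₀ φ(0) s(ξ)`, and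
monotonicity of `φ + K s` gives `s(t) - s(ξ) ≤ (φ(t + 1) - φ(t)) / K`. Together these bound `s(t)`
by a constant multiple of `φ(t + 1) - φ(t)`, which tends to `0`; hence `‖γ t‖ → 1`.
-/

/-- Strong monotonicity of `-∇A` relative to the critical point `m`, obtained by integrating the
Hessian bound along the segment from `m` to `u`. -/
lemma inner_gradient_sub_le {E : Type*} [NormedAddCommGroup E] [InnerProductSpace ℝ E]
    [CompleteSpace E] {c : ℝ} {A : E → ℝ} (hA : ContDiff ℝ 2 A) {S : Set E} (hS : Convex ℝ S)
    (hHess : ∀ u ∈ S, ∀ v : E, iteratedFDeriv ℝ 2 A u ![v, v] ≤ -c * ‖v‖ ^ 2)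
    {m u : E} (hm : m ∈ S) (hgrad : gradient A m = 0) (hu : u ∈ S) :
    inner ℝ (gradient A u) (u - m) ≤ -c * ‖u - m‖ ^ 2 := by
  set w := u - m with hw
  have hdiff : Differentiable ℝ (fderiv ℝ A) :=
    (hA.fderiv_right (m := 1) (by norm_num)).differentiable (by norm_num)
  have hder : ∀ τ : ℝ, HasDerivAt (fun τ : ℝ => fderiv ℝ A (m + τ • w) w)
      (fderiv ℝ (fderiv ℝ A) (m + τ • w) w w) τ := by
    intro τ
    have h1 : HasDerivAt (fun τ : ℝ => m + τ • w) w τ := by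
      simpa using ((hasDerivAt_id τ).smul_const w).const_add m
    have h2 := (hdiff (m + τ • w)).hasFDerivAt.comp_hasDerivAt τ h1
    simpa using h2.clm_apply (hasDerivAt_const τ w)
  obtain ⟨τ, hτ, h⟩ := exists_hasDerivAt_eq_slope
    (fun τ : ℝ => fderiv ℝ A (m + τ • w) w) _ zero_lt_one
    (fun τ _ => (hder τ).continuousAt.continuousWithinAt) (fun τ _ => hder τ)
  have hmem : m + τ • w ∈ S := hS.add_smul_sub_mem hm hu ⟨hτ.1.le, hτ.2.le⟩
  have hH := hHess _ hmem w
  rw [iteratedFDeriv_two_apply] at hH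
  have e1 : ∀ x v, inner ℝ (gradient A x) v = fderiv ℝ A x v := by
    intro x v
    simp [gradient]
  have e0 : fderiv ℝ A m w = 0 := by rw [← e1, hgrad, inner_zero_left]
  have eu : m + (1 : ℝ) • w = u := by simp [hw]
  simp only [eu, zero_smul, add_zero, e0, sub_zero, div_one] at h
  rw [e1, ← h]
  simpa using hH

/-- Escape to the boundary (used in the proof of Lemma 4.5): under the strict Hessian
upper bound `D²A ≤ -c₀·Id` on the closed unit ball, every forward integral curve of
`u ↦ -(1-‖u‖²)·∇A(u)` starting at a point different from the unique interior critical
point `m` satisfies `‖γ(t)‖ → 1` as `t → ∞`. -/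
theorem stmt_6 (k : ℕ) (hk : 1 ≤ k) (c₀ : ℝ) (hc₀ : 0 < c₀)
    (A : EuclideanSpace ℝ (Fin k) → ℝ) (hA : ContDiff ℝ 2 A)
    (hHess : ∀ u ∈ Metric.closedBall (0 : EuclideanSpace ℝ (Fin k)) 1,
      ∀ v : EuclideanSpace ℝ (Fin k),
        iteratedFDeriv ℝ 2 A u ![v, v] ≤ -c₀ * ‖v‖ ^ 2)
    (m : EuclideanSpace ℝ (Fin k))
    (hm : m ∈ Metric.ball (0 : EuclideanSpace ℝ (Fin k)) 1)
    (hgrad : gradient A m = 0)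
    (γ : ℝ → EuclideanSpace ℝ (Fin k))
    (hγ : ∀ t : ℝ, 0 ≤ t →
      γ t ∈ Metric.closedBall (0 : EuclideanSpace ℝ (Fin k)) 1 ∧
      HasDerivAt γ (-(1 - ‖γ t‖ ^ 2) • gradient A (γ t)) t)
    (hγ0 : γ 0 ≠ m) :
    Filter.Tendsto (fun t => ‖γ t‖) Filter.atTop (nhds 1) := by
  set B := Metric.closedBall (0 : EuclideanSpace ℝ (Fin k)) 1 with hB
  have hmB : m ∈ B := Metric.ball_subset_closedBall hm
  have hcontgrad : Continuous (gradient A) :=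
    (InnerProductSpace.toDual ℝ _).symm.continuous.comp (hA.continuous_fderiv (by norm_num))
  obtain ⟨M, hM0, hM⟩ : ∃ M : ℝ, 0 < M ∧ ∀ u ∈ B, |inner ℝ u (gradient A u)| ≤ M := by
    obtain ⟨C, hC⟩ := (isCompact_closedBall (0 : EuclideanSpace ℝ (Fin k))
      1).exists_bound_of_continuousOn
      (f := fun u => inner ℝ u (gradient A u)) (by fun_prop)
    exact ⟨max C 1, by positivity, fun u hu => (hC u hu).trans (le_max_left _ _)⟩
  set φ : ℝ → ℝ := fun t => ‖γ t - m‖ ^ 2 with hφ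
  set s : ℝ → ℝ := fun t => 1 - ‖γ t‖ ^ 2 with hs
  have hnorm : ∀ t, 0 ≤ t → ‖γ t‖ ≤ 1 := fun t ht => by simpa [hB] using (hγ t ht).1
  have hs0 : ∀ t, 0 ≤ t → 0 ≤ s t := by
    intro t ht
    have := hnorm t ht
    have := norm_nonneg (γ t)
    simp only [hs]
    nlinarith
  have hφder : ∀ t, 0 ≤ t →
      HasDerivAt φ (-2 * s t * inner ℝ (gradient A (γ t)) (γ t - m)) t := by
    intro t ht
    have h := ((hγ t ht).2.sub_const m).norm_sq
    refine h.congr_deriv ?_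
    rw [inner_smul_right, real_inner_comm]
    simp only [hs]
    ring
  have hsder : ∀ t, 0 ≤ t →
      HasDerivAt s (2 * s t * inner ℝ (γ t) (gradient A (γ t))) t := by
    intro t ht
    have h := ((hγ t ht).2.norm_sq).const_sub 1
    refine h.congr_deriv ?_
    rw [inner_smul_right]
    simp only [hs]
    ring
  have hφle : ∀ t, 0 ≤ t →
      2 * c₀ * s t * φ t ≤ -2 * s t * inner ℝ (gradient A (γ t)) (γ t - m) := by
    intro t ht
    have h := inner_gradient_sub_le hA (convex_closedBall _ _) hHess hmB hgrad (hγ t ht).1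
    have h2 := mul_le_mul_of_nonneg_left h (hs0 t ht)
    simp only [hφ]
    linarith
  have hφmono : MonotoneOn φ (Set.Ici 0) := by
    refine monotoneOn_of_hasDerivWithinAt_nonneg (convex_Ici 0)
      (fun t ht => (hφder t ht).continuousAt.continuousWithinAt)
      (fun t ht => (hφder t (interior_subset ht)).hasDerivWithinAt) ?_
    intro t ht
    have ht : 0 ≤ t := interior_subset ht
    refine le_trans ?_ (hφle t ht)
    have := hs0 t ht
    positivity
  have hd : 0 < φ 0 := by
    have : 0 < ‖γ 0 - m‖ := norm_pos_iff.mpr (sub_ne_zero.mpr hγ0)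
    positivity
  set d := φ 0 with hd_def
  have hφd : ∀ t, 0 ≤ t →
      2 * c₀ * d * s t ≤ -2 * s t * inner ℝ (gradient A (γ t)) (γ t - m) := by
    intro t ht
    refine le_trans ?_ (hφle t ht)
    have h1 : d ≤ φ t := hφmono Set.self_mem_Ici ht ht
    have h2 := mul_le_mul_of_nonneg_left h1 (mul_nonneg hc₀.le (hs0 t ht))
    linarith
  obtain ⟨K, hK0, hKM⟩ : ∃ K : ℝ, 0 < K ∧ K * M = c₀ * d :=
    ⟨c₀ * d / M, by positivity, by field_simp⟩
  have hFmono : MonotoneOn (fun t => φ t + K * s t) (Set.Ici 0) := by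
    have hFder : ∀ t, 0 ≤ t → HasDerivAt (fun t => φ t + K * s t) _ t :=
      fun t ht => (hφder t ht).add ((hsder t ht).const_mul K)
    refine monotoneOn_of_hasDerivWithinAt_nonneg (convex_Ici 0)
      (fun t ht => (hFder t ht).continuousAt.continuousWithinAt)
      (fun t ht => (hFder t (interior_subset ht)).hasDerivWithinAt) ?_
    intro t ht
    have ht : 0 ≤ t := interior_subset ht
    have h1 := hφd t ht
    have h2 := (abs_le.mp (hM _ (hγ t ht).1)).1
    have h3 := mul_le_mul_of_nonneg_left h2 (mul_nonneg hK0.le (hs0 t ht))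
    have h4 : K * s t * -M = -(c₀ * d * s t) := by rw [← hKM]; ring
    linarith
  have hbound : ∀ t, 0 ≤ t → s t ≤ (1 / (2 * c₀ * d) + 1 / K) * (φ (t + 1) - φ t) := by
    intro t ht
    obtain ⟨ξ, hξ, h⟩ := exists_hasDerivAt_eq_slope φ _ (lt_add_one t)
      (fun τ hτ => (hφder τ (ht.trans hτ.1)).continuousAt.continuousWithinAt)
      (fun τ hτ => hφder τ (ht.trans hτ.1.le))
    have hξ0 : 0 ≤ ξ := ht.trans hξ.1.le
    have h1 := hφd ξ hξ0
    rw [h, add_sub_cancel_left, div_one] at h1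
    have h2 : φ t + K * s t ≤ φ ξ + K * s ξ := hFmono ht hξ0 hξ.1.le
    have h3 : φ ξ ≤ φ (t + 1) := hφmono hξ0 (hξ0.trans hξ.2.le) hξ.2.le
    have h4 : s ξ ≤ (φ (t + 1) - φ t) / (2 * c₀ * d) := by
      rw [le_div_iff₀ (by positivity)]
      linarith
    have h5 : s t - s ξ ≤ (φ (t + 1) - φ t) / K := by
      rw [le_div_iff₀ hK0]
      linarith
    calc s t ≤ (φ (t + 1) - φ t) / (2 * c₀ * d) + (φ (t + 1) - φ t) / K := by linarith
      _ = _ := by ring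
  obtain ⟨l, hl⟩ : ∃ l, Filter.Tendsto φ Filter.atTop (nhds l) := by
    -- `φ` is only controlled on `[0, ∞)`, so it is extended to a monotone function on `ℝ`.
    have hmono : Monotone (fun t => φ (max t 0)) := fun a b hab =>
      hφmono (le_max_right a 0) (le_max_right b 0) (max_le_max_right 0 hab)
    have hbdd : BddAbove (Set.range (fun t => φ (max t 0))) := by
      refine ⟨(1 + ‖m‖) ^ 2, ?_⟩
      rintro _ ⟨t, rfl⟩
      have h1 := hnorm (max t 0) (le_max_right _ _)
      have h2 := norm_sub_le (γ (max t 0)) m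
      simp only [hφ]
      gcongr
      linarith
    refine ⟨_, (tendsto_atTop_ciSup hmono hbdd).congr' ?_⟩
    filter_upwards [Filter.eventually_ge_atTop 0] with t ht
    rw [max_eq_left ht]
  have hstend : Filter.Tendsto s Filter.atTop (nhds 0) := by
    have hl1 : Filter.Tendsto (fun t => φ (t + 1)) Filter.atTop (nhds l) :=
      hl.comp (Filter.tendsto_atTop_add_const_right _ 1 Filter.tendsto_id)
    have h := (hl1.sub hl).const_mul (1 / (2 * c₀ * d) + 1 / K)
    rw [sub_self, mul_zero] at h
    refine tendsto_of_tendsto_of_tendsto_of_le_of_le' tendsto_const_nhds h ?_ ?_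
    · filter_upwards [Filter.eventually_ge_atTop 0] with t ht using hs0 t ht
    · filter_upwards [Filter.eventually_ge_atTop 0] with t ht using hbound t ht
  have h := (hstend.const_sub 1).sqrt
  simpa [hs] using h
end

section
/- Let k ≥ 1 and 0 < c₀ < 1, let S be a compact metric space, and suppose given: (i) a map A : S → (E → ℝ) such that each A_s is C² and satisfies -(1/c₀)·‖v‖² ≤ D²A_s(u)(v,v) ≤ -c₀·‖v‖² for all u ∈ B̄ and v ∈ E, and such that (s,u) ↦ A_s(u) is continuous on S × B̄; (ii) a continuous map m : S → B̄ with ∇A_s(m(s)) = 0 and ‖m(s)‖ ≤ c₀/√10 for every s ∈ S; (iii) a continuous map φ : S × B̄ × [0,∞) → B̄ such that φ(s,v,0) = v and, for each (s,v), the curve t ↦ φ(s,v,t) has derivative -(1 - ‖φ(s,v,t)‖²)·∇A_s(φ(s,v,t)) at every t ≥ 0. Then for every δ with 0 < δ < 1/4 there exists T ≥ 0 such that for every s ∈ S and every v ∈ B̄ with ‖v - m(s)‖ ≥ δ one has A_s(φ(s,v,T)) < A_s(0) - c₀/10 and ‖φ(s,v,T)‖ > c₀/4. -/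
/-!
The proof is quantitative and gives an explicit `T = 20 / (c₀ δ²)`.

Concavity along the segment from `m` to `u` gives `⟪u - m, ∇A(u)⟫ ≤ -c₀ ‖u - m‖²` and
`A(u) ≤ A(m) - (c₀/2) ‖u - m‖²`; the lower Hessian bound gives
`A(0) ≥ A(m) - ‖m‖² / (2c₀) ≥ A(m) - c₀/20` (`along_segment_upper`, `along_segment_lower`).

Hence along the flow `‖φ - m‖²` is nondecreasing, with derivative at least
`2 c₀ (1 - ‖φ‖²) ‖φ - m‖²`. Starting at distance at least `δ` from `m`, the trajectory cannot stay
in `‖u‖ < 9/10` up to time `T`, since `‖φ - m‖²` would then exceed its maximal value `4`. At a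
time with `‖φ‖ ≥ 9/10` one has `‖φ - m‖ ≥ 9/10 - c₀/√10`, and by monotonicity this persists
until `T`. Both conclusions follow from this last inequality: the strict drop in `A` because
`(9/10 - 1/√10)² > 3/10`, and the norm bound because `9/10 - 2c₀/√10 > c₀/4`.
-/

/-- Monotonicity from a nonnegative derivative, assumed only on `[a, b]`. -/
lemma le_of_hasDerivAt_nonneg {h h' : ℝ → ℝ} {a b : ℝ} (hab : a ≤ b)
    (hd : ∀ r ∈ Set.Icc a b, HasDerivAt h (h' r) r) (hn : ∀ r ∈ Set.Icc a b, 0 ≤ h' r) :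
    h a ≤ h b := by
  have hmono : MonotoneOn h (Set.Icc a b) := by
    apply monotoneOn_of_deriv_nonneg (convex_Icc a b)
    · exact fun r hr => (hd r hr).continuousAt.continuousWithinAt
    · exact fun r hr =>
        (hd r (interior_subset hr)).differentiableAt.differentiableWithinAt
    · intro r hr
      rw [(hd r (interior_subset hr)).deriv]
      exact hn r (interior_subset hr)
  exact hmono (Set.left_mem_Icc.2 hab) (Set.right_mem_Icc.2 hab) hab

/-- Second-order Taylor estimate at a critical point, in one variable. -/
lemma taylor_upper {f f' f'' : ℝ → ℝ} {b : ℝ}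
    (hf : ∀ r, HasDerivAt f (f' r) r) (hf' : ∀ r, HasDerivAt f' (f'' r) r)
    (h0 : f' 0 = 0) (hb : ∀ r ∈ Set.Icc (0 : ℝ) 1, f'' r ≤ b) :
    f' 1 ≤ b ∧ f 1 ≤ f 0 + b / 2 := by
  have h1 : ∀ x ∈ Set.Icc (0 : ℝ) 1, f' x ≤ b * x := by
    intro x hx
    have := le_of_hasDerivAt_nonneg (h := fun r => b * r - f' r) (h' := fun r => b * 1 - f'' r)
      hx.1 (fun r _ => ((hasDerivAt_id r).const_mul b).sub (hf' r))
      (fun r hr => by have := hb r ⟨hr.1, hr.2.trans hx.2⟩; linarith)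
    simp only [h0] at this
    linarith
  refine ⟨by simpa using h1 1 (by simp), ?_⟩
  have := le_of_hasDerivAt_nonneg (h := fun r => b / 2 * r ^ 2 - f r)
    (h' := fun r => b * r - f' r) zero_le_one
    (fun r _ => by
      have h2 := ((hasDerivAt_pow 2 r).const_mul (b / 2)).sub (hf r)
      exact h2.congr_deriv (by norm_num; ring))
    (fun r hr => by have := h1 r hr; linarith)
  norm_num at this
  linarith

section
variable {E : Type*} [NormedAddCommGroup E] [InnerProductSpace ℝ E]

lemma hasDerivAt_segment {A : E → ℝ} (hA : ContDiff ℝ 2 A) (m w : E) (r : ℝ) :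
    HasDerivAt (fun r : ℝ => A (m + r • w)) (fderiv ℝ A (m + r • w) w) r := by
  have hl : HasDerivAt (fun r : ℝ => m + r • w) w r := by
    simpa using ((hasDerivAt_id r).smul_const w).const_add m
  exact ((hA.differentiable (by norm_num)) _).hasFDerivAt.comp_hasDerivAt r hl

lemma hasDerivAt_segment_two {A : E → ℝ} (hA : ContDiff ℝ 2 A) (m w : E) (r : ℝ) :
    HasDerivAt (fun r : ℝ => fderiv ℝ A (m + r • w) w)
      (iteratedFDeriv ℝ 2 A (m + r • w) ![w, w]) r := by
  have hl : HasDerivAt (fun r : ℝ => m + r • w) w r := by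
    simpa using ((hasDerivAt_id r).smul_const w).const_add m
  have hd : Differentiable ℝ (fderiv ℝ A) :=
    (hA.fderiv_right (m := 1) (by norm_num)).differentiable (by norm_num)
  have hL : HasDerivAt (fun r : ℝ => fderiv ℝ A (m + r • w))
      (fderiv ℝ (fderiv ℝ A) (m + r • w) w) r :=
    (hd (m + r • w)).hasFDerivAt.comp_hasDerivAt r hl
  rw [iteratedFDeriv_two_apply]
  exact (ContinuousLinearMap.apply ℝ ℝ w).hasFDerivAt.comp_hasDerivAt r hL

lemma along_segment_upper {A : E → ℝ} (hA : ContDiff ℝ 2 A) {c : ℝ} {m u : E}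
    (hH : ∀ x ∈ Metric.closedBall (0 : E) 1, ∀ v,
      iteratedFDeriv ℝ 2 A x ![v, v] ≤ c * ‖v‖ ^ 2)
    (hm : m ∈ Metric.closedBall (0 : E) 1) (hu : u ∈ Metric.closedBall (0 : E) 1)
    (hcrit : fderiv ℝ A m = 0) :
    fderiv ℝ A u (u - m) ≤ c * ‖u - m‖ ^ 2 ∧ A u ≤ A m + c * ‖u - m‖ ^ 2 / 2 := by
  have h := taylor_upper (b := c * ‖u - m‖ ^ 2) (hasDerivAt_segment hA m (u - m))
    (hasDerivAt_segment_two hA m (u - m)) (by simp [hcrit])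
    (fun r hr => hH _ ((convex_closedBall (0 : E) 1).add_smul_sub_mem hm hu hr) _)
  simpa using h

lemma along_segment_lower {A : E → ℝ} (hA : ContDiff ℝ 2 A) {c : ℝ} {m u : E}
    (hH : ∀ x ∈ Metric.closedBall (0 : E) 1, ∀ v,
      c * ‖v‖ ^ 2 ≤ iteratedFDeriv ℝ 2 A x ![v, v])
    (hm : m ∈ Metric.closedBall (0 : E) 1) (hu : u ∈ Metric.closedBall (0 : E) 1)
    (hcrit : fderiv ℝ A m = 0) :
    A m + c * ‖u - m‖ ^ 2 / 2 ≤ A u := by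
  have h := (taylor_upper (b := -(c * ‖u - m‖ ^ 2))
    (fun r => (hasDerivAt_segment hA m (u - m) r).neg)
    (fun r => (hasDerivAt_segment_two hA m (u - m) r).neg) (by simp [hcrit])
    (fun r hr => neg_le_neg
      (hH _ ((convex_closedBall (0 : E) 1).add_smul_sub_mem hm hu hr) _))).2
  simp at h
  linarith

end


/-- Lemma 4.5 of the paper (uniform deformation-time lemma), abstracted: given a
compact family `s ↦ A_s` of `C²` functions on Euclidean space with two-sided Hessian
bounds on the closed unit ball, continuous maximum points `m(s)` with `‖m(s)‖ ≤ c₀/√10`,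
and a continuous flow `φ` of the vector fields `u ↦ -(1-‖u‖²)·∇A_s(u)`, for every
`0 < δ < 1/4` there is a uniform time `T ≥ 0` after which every point at distance at
least `δ` from `m(s)` has been moved to where `A_s < A_s(0) - c₀/10` and `‖·‖ > c₀/4`. -/
theorem stmt_7 (k : ℕ) (hk : 1 ≤ k) (c₀ : ℝ) (hc₀ : 0 < c₀) (hc₀' : c₀ < 1)
    (S : Type*) [MetricSpace S] [CompactSpace S]
    (A : S → EuclideanSpace ℝ (Fin k) → ℝ)
    (hA : ∀ s : S, ContDiff ℝ 2 (A s))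
    (hHess : ∀ s : S, ∀ u ∈ Metric.closedBall (0 : EuclideanSpace ℝ (Fin k)) 1,
      ∀ v : EuclideanSpace ℝ (Fin k),
        -(1 / c₀) * ‖v‖ ^ 2 ≤ iteratedFDeriv ℝ 2 (A s) u ![v, v] ∧
        iteratedFDeriv ℝ 2 (A s) u ![v, v] ≤ -c₀ * ‖v‖ ^ 2)
    (hAcont : ContinuousOn (fun p : S × EuclideanSpace ℝ (Fin k) => A p.1 p.2)
      ((Set.univ : Set S) ×ˢ Metric.closedBall 0 1))
    (m : S → EuclideanSpace ℝ (Fin k)) (hmcont : Continuous m)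
    (hmball : ∀ s : S, m s ∈ Metric.closedBall (0 : EuclideanSpace ℝ (Fin k)) 1)
    (hmcrit : ∀ s : S, gradient (A s) (m s) = 0)
    (hmsmall : ∀ s : S, ‖m s‖ ≤ c₀ / Real.sqrt 10)
    (φ : S → EuclideanSpace ℝ (Fin k) → ℝ → EuclideanSpace ℝ (Fin k))
    (hφcont : ContinuousOn (fun p : S × EuclideanSpace ℝ (Fin k) × ℝ => φ p.1 p.2.1 p.2.2)
      ((Set.univ : Set S) ×ˢ Metric.closedBall 0 1 ×ˢ Set.Ici (0 : ℝ)))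
    (hφ0 : ∀ s : S, ∀ v ∈ Metric.closedBall (0 : EuclideanSpace ℝ (Fin k)) 1, φ s v 0 = v)
    (hφball : ∀ s : S, ∀ v ∈ Metric.closedBall (0 : EuclideanSpace ℝ (Fin k)) 1,
      ∀ t : ℝ, 0 ≤ t → φ s v t ∈ Metric.closedBall (0 : EuclideanSpace ℝ (Fin k)) 1)
    (hφderiv : ∀ s : S, ∀ v ∈ Metric.closedBall (0 : EuclideanSpace ℝ (Fin k)) 1,
      ∀ t : ℝ, 0 ≤ t →
        HasDerivAt (φ s v) (-(1 - ‖φ s v t‖ ^ 2) • gradient (A s) (φ s v t)) t) :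
    ∀ δ : ℝ, 0 < δ → δ < 1 / 4 →
      ∃ T : ℝ, 0 ≤ T ∧
        ∀ s : S, ∀ v ∈ Metric.closedBall (0 : EuclideanSpace ℝ (Fin k)) 1,
          δ ≤ ‖v - m s‖ →
            A s (φ s v T) < A s 0 - c₀ / 10 ∧ c₀ / 4 < ‖φ s v T‖ := by

  intro δ hδ hδ'
  have h10 : (1 : ℝ) / Real.sqrt 10 < 0.317 := by
    rw [div_lt_iff₀ (by positivity)]
    have : (3.16 : ℝ) < Real.sqrt 10 := Real.lt_sqrt_of_sq_lt (by norm_num)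
    linarith
  have hT : (0 : ℝ) ≤ 20 / (c₀ * δ ^ 2) := by positivity
  refine ⟨20 / (c₀ * δ ^ 2), hT, ?_⟩
  intro s v hv hvm
  set T : ℝ := 20 / (c₀ * δ ^ 2) with hTdef
  have hcrit : fderiv ℝ (A s) (m s) = 0 := by
    have h := hmcrit s
    rw [gradient] at h
    simpa using h
  have hmlt : ‖m s‖ ≤ c₀ * 0.317 := by
    have h := hmsmall s
    have h2 : c₀ / Real.sqrt 10 = c₀ * (1 / Real.sqrt 10) := by ring
    nlinarith
  have hmsq : ‖m s‖ ^ 2 ≤ c₀ ^ 2 / 10 := by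
    have h := pow_le_pow_left₀ (norm_nonneg _) (hmsmall s) 2
    rwa [div_pow, Real.sq_sqrt (by norm_num)] at h
  have hup := fun u hu => along_segment_upper (hA s) (fun x hx v => (hHess s x hx v).2)
    (hmball s) (u := u) hu hcrit
  have hA0 := along_segment_lower (hA s) (fun x hx v => (hHess s x hx v).1)
    (hmball s) (u := 0) (by simp) hcrit
  -- The squared distance to the maximum point along the trajectory, and its derivative.
  set g : ℝ → ℝ := fun t => ‖φ s v t - m s‖ ^ 2 with hg
  set g' : ℝ → ℝ := fun t =>
    -2 * (1 - ‖φ s v t‖ ^ 2) * fderiv ℝ (A s) (φ s v t) (φ s v t - m s) with hg'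
  have hgd : ∀ t, 0 ≤ t → HasDerivAt g (g' t) t := by
    intro t ht
    have h := ((hφderiv s v hv t ht).sub_const (m s)).norm_sq
    convert h using 1
    rw [inner_smul_right, real_inner_comm, gradient, InnerProductSpace.toDual_symm_apply]
    simp only [hg']
    ring
  have hball : ∀ t, 0 ≤ t → ‖φ s v t‖ ≤ 1 := fun t ht => by
    simpa using hφball s v hv t ht
  have hgl : ∀ t, 0 ≤ t → 2 * c₀ * (1 - ‖φ s v t‖ ^ 2) * g t ≤ g' t := by
    intro t ht
    have h1 := (hup _ (hφball s v hv t ht)).1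
    have h2 : 0 ≤ 1 - ‖φ s v t‖ ^ 2 := by
      nlinarith [hball t ht, norm_nonneg (φ s v t)]
    simp only [hg', hg]
    nlinarith [mul_le_mul_of_nonneg_left h1 h2]
  have hg'n : ∀ t, 0 ≤ t → 0 ≤ g' t := fun t ht => by
    refine le_trans ?_ (hgl t ht)
    have h2 : 0 ≤ 1 - ‖φ s v t‖ ^ 2 := by
      nlinarith [hball t ht, norm_nonneg (φ s v t)]
    have h3 : 0 ≤ g t := sq_nonneg _
    positivity
  have hmono : ∀ a b, 0 ≤ a → a ≤ b → g a ≤ g b := fun a b ha hab =>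
    le_of_hasDerivAt_nonneg hab (fun r hr => hgd r (ha.trans hr.1))
      (fun r hr => hg'n r (ha.trans hr.1))
  have hg0 : δ ^ 2 ≤ g 0 := by
    simp only [hg, hφ0 s v hv]
    exact pow_le_pow_left₀ hδ.le hvm 2
  have hex : ∃ t ∈ Set.Icc (0 : ℝ) T, 0.9 ≤ ‖φ s v t‖ := by
    by_contra! hcon
    have h := le_of_hasDerivAt_nonneg (h := fun t => g t - 0.38 * c₀ * δ ^ 2 * t)
      (h' := fun t => g' t - 0.38 * c₀ * δ ^ 2 * 1) hT
      (fun r hr => (hgd r hr.1).sub ((hasDerivAt_id r).const_mul _))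
      (fun r hr => by
        have h1 := hgl r hr.1
        have h2 : δ ^ 2 ≤ g r := hg0.trans (hmono 0 r le_rfl hr.1)
        have h3 : (0.19 : ℝ) ≤ 1 - ‖φ s v r‖ ^ 2 := by
          nlinarith [hcon r hr, norm_nonneg (φ s v r)]
        have h4 : 0.19 * δ ^ 2 ≤ (1 - ‖φ s v r‖ ^ 2) * g r :=
          mul_le_mul h3 h2 (by positivity) (by linarith)
        nlinarith [mul_le_mul_of_nonneg_left h4 hc₀.le])
    have hval : 0.38 * c₀ * δ ^ 2 * T = 7.6 := by
      rw [hTdef]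
      field_simp
      norm_num
    have hle : g T ≤ 4 := by
      have h5 : ‖φ s v T - m s‖ ≤ 2 := by
        have h6 := norm_sub_le (φ s v T) (m s)
        have h7 : ‖m s‖ ≤ 1 := by simpa using hmball s
        linarith [hball T hT]
      simp only [hg]
      nlinarith [norm_nonneg (φ s v T - m s)]
    simp only [hval] at h
    nlinarith [sq_nonneg δ]
  obtain ⟨t, ht, ht9⟩ := hex
  have hdist : 0.9 - c₀ * 0.317 ≤ ‖φ s v T - m s‖ := by
    have h1 : ‖φ s v t - m s‖ ≤ ‖φ s v T - m s‖ :=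
      le_of_sq_le_sq (hmono t T ht.1 ht.2) (norm_nonneg _)
    have h2 := norm_sub_norm_le (φ s v t) (m s)
    linarith
  constructor
  · have h1 := (hup _ (hφball s v hv T hT)).2
    have h2 : (0.3 : ℝ) < ‖φ s v T - m s‖ ^ 2 := by nlinarith
    have h3 : A s (m s) - c₀ / 20 ≤ A s 0 := by
      refine le_trans ?_ hA0
      have h4 : 1 / c₀ * ‖m s‖ ^ 2 ≤ c₀ / 10 := by
        rw [one_div, inv_mul_le_iff₀ hc₀]
        linarith
      rw [zero_sub, norm_neg]
      linarith
    nlinarith [mul_lt_mul_of_pos_left h2 hc₀]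
  · have h1 := norm_sub_le (φ s v T) (m s)
    linarith
end

section
/- Let k ≥ 1, let X be a compact metric space with distance d, let B̄ᵏ be the closed unit ball of the k-dimensional Euclidean space, and suppose given: a continuous map F : B̄ᵏ × X → X with F(0,x) = x and F(-v, F(v,x)) = x for all v ∈ B̄ᵏ and x ∈ X; a continuous function μ : X → ℝ; and a point Σ ∈ X such that μ(F(v,Σ)) < μ(Σ) for every v ∈ B̄ᵏ with v ≠ 0. Then for every ε > 0 there exists η > 0 such that: whenever x ∈ X satisfies d(x,Σ) ≥ ε and μ(F(v,x)) ≤ μ(x) + η for some v ∈ B̄ᵏ, one has d(F(v,x), Σ) ≥ 2η. -/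
/-!
On the compact set of pairs `(v, x)` with `‖v‖ ≤ 1` and `d(x, Σ) ≥ ε`, the continuous function
`max (μ (F v x) - μ x) (d(F v x, Σ))` is strictly positive. Indeed, if it were `≤ 0` at `(v, x)`,
then `F v x = Σ`, so `x = F (-v) Σ` and `μ (F (-v) Σ) ≥ μ Σ`; this forces `v = 0` and hence
`x = Σ`, contradicting `d(x, Σ) ≥ ε`. The function is therefore bounded below by some `m > 0`, and
`η = m / 2` works.
-/

/-- Abstract form of Lemma 4.4 (the "stay-away" lemma): `X` compact metric, `F` a
continuous action of the closed unit ball of `ℝᵏ` with `F 0 = id` and `F (-v)` inverting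
`F v`, `μ` continuous, and `Σ` a point whose `μ`-value strictly drops under every
`F v` with `v ≠ 0`.  Then for every `ε > 0` there is `η > 0` such that any `x` with
`d(x,Σ) ≥ ε` whose mass increases by at most `η` under some `F v` ends up at distance
at least `2η` from `Σ`. -/
theorem stmt_8 (k : ℕ) (hk : 1 ≤ k)
    (X : Type*) [MetricSpace X] [CompactSpace X]
    (F : EuclideanSpace ℝ (Fin k) → X → X)
    (hFcont : ContinuousOn (fun p : EuclideanSpace ℝ (Fin k) × X => F p.1 p.2)
      (Metric.closedBall 0 1 ×ˢ (Set.univ : Set X)))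
    (hF0 : ∀ x : X, F 0 x = x)
    (hFinv : ∀ v ∈ Metric.closedBall (0 : EuclideanSpace ℝ (Fin k)) 1,
      ∀ x : X, F (-v) (F v x) = x)
    (μ : X → ℝ) (hμ : Continuous μ)
    (Sig : X)
    (hSig : ∀ v ∈ Metric.closedBall (0 : EuclideanSpace ℝ (Fin k)) 1,
      v ≠ 0 → μ (F v Sig) < μ Sig) :
    ∀ ε : ℝ, 0 < ε → ∃ η : ℝ, 0 < η ∧
      ∀ x : X, ε ≤ dist x Sig →
        ∀ v ∈ Metric.closedBall (0 : EuclideanSpace ℝ (Fin k)) 1,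
          μ (F v x) ≤ μ x + η → 2 * η ≤ dist (F v x) Sig := by
  intro ε hε
  have hK : IsCompact (Metric.closedBall (0 : EuclideanSpace ℝ (Fin k)) 1 ×ˢ
      {x : X | ε ≤ dist x Sig}) :=
    (isCompact_closedBall 0 1).prod
      (isClosed_le continuous_const (continuous_id.dist continuous_const)).isCompact
  have hF := hFcont.mono
    (Set.prod_mono_right (Set.subset_univ {x : X | ε ≤ dist x Sig}))
  have hg : ContinuousOn (fun p : EuclideanSpace ℝ (Fin k) × X =>
      max (μ (F p.1 p.2) - μ p.2) (dist (F p.1 p.2) Sig))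
      (Metric.closedBall 0 1 ×ˢ {x : X | ε ≤ dist x Sig}) :=
    ((hμ.comp_continuousOn hF).sub (hμ.comp continuous_snd).continuousOn).sup
      ((continuous_id.dist continuous_const).comp_continuousOn hF)
  obtain ⟨m, hm, hmin⟩ := hK.exists_forall_le' hg (a := 0) (by
    rintro ⟨v, x⟩ ⟨hv, hx⟩
    by_contra! hle
    obtain ⟨hmass, hdist⟩ := max_le_iff.1 hle
    have hvx : F v x = Sig := dist_le_zero.1 hdist
    have hinv : F (-v) Sig = x := hvx ▸ hFinv v hv x
    have hv0 : v = 0 := by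
      by_contra hne
      have := hSig (-v) (by simpa using hv) (neg_ne_zero.2 hne)
      simp only [hvx] at hmass
      rw [hinv] at this
      linarith
    have hxS : x = Sig := by rw [← hvx, hv0, hF0]
    have hx' : ε ≤ dist x Sig := hx
    rw [hxS, dist_self] at hx'
    linarith)
  refine ⟨m / 2, by positivity, fun x hx v hv hmass => ?_⟩
  -- The mass entry of the maximum is at most `m / 2 < m`, so the distance entry is at least `m`.
  rcases le_max_iff.1 (hmin (v, x) ⟨hv, hx⟩) with h | h
  · simp only at h
    linarith
  · simp only at h
    linarith
end

section
/- Let k ≥ 0 and N ≥ 1, and let K be a (geometric) simplicial complex in ℝᴺ with finitely many faces, each face having at most k+1 vertices (so K has dimension at most k). Let |K| ⊆ ℝᴺ denote the underlying space of K (the union of the convex hulls of its faces), and let f : |K| → E be a continuous map into the (k+1)-dimensional Euclidean space E. Then for every ε > 0 there exists a continuous map a : |K| → E such that ‖a(x)‖ < ε and a(x) ≠ f(x) for every x ∈ |K|. -/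
/-!
The underlying space `|K|` is a finite union of simplices of dimension at most `k`, so it is compact
and has Hausdorff dimension at most `k`. Extend `f` to all of `ℝᴺ` by Tietze's theorem and let `g`
be a smooth map within `ε / 2` of that extension. Smooth maps do not raise Hausdorff dimension, so
`g(|K|)` has dense complement in `ℝ^{k+1}`, and there is a vector `v` with `‖v‖ < ε / 2` and
`v ∉ g(|K|)`. Then `a = f - g + v` is smaller than `ε`, and `a - f = v - g` never vanishes on `|K|`.
-/

/-- A simplex lies in a translate of its direction space `vectorSpan`, which has dimension at most
the number of vertices minus one. -/
theorem dimH_convexHull_finset_le {N k : ℕ} (s : Finset (EuclideanSpace ℝ (Fin N)))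
    (hs : s.card ≤ k + 1) :
    dimH (convexHull ℝ (s : Set (EuclideanSpace ℝ (Fin N)))) ≤ k := by
  rcases s.eq_empty_or_nonempty with rfl | ⟨p, hp⟩
  · simp
  set V := vectorSpan ℝ (s : Set (EuclideanSpace ℝ (Fin N))) with hV
  have hsub : convexHull ℝ (s : Set (EuclideanSpace ℝ (Fin N))) ⊆
      (fun v : V => (v : EuclideanSpace ℝ (Fin N)) + p) '' Set.univ := by
    intro x hx
    have hx' := convexHull_subset_affineSpan _ hx
    have hp' := subset_affineSpan ℝ _ (Finset.mem_coe.2 hp)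
    refine ⟨⟨x - p, ?_⟩, trivial, by simp⟩
    rw [hV, ← direction_affineSpan]
    exact AffineSubspace.vsub_mem_direction hx' hp'
  have hiso : Isometry (fun v : V => (v : EuclideanSpace ℝ (Fin N)) + p) :=
    Isometry.of_dist_eq fun v w => by simp [Subtype.dist_eq]
  refine (dimH_mono hsub).trans ?_
  rw [hiso.dimH_image, Real.dimH_univ_eq_finrank]
  have hfr : Module.finrank ℝ V ≤ k := by
    obtain ⟨n, hn⟩ : ∃ n, s.card = n + 1 :=
      Nat.exists_eq_succ_of_ne_zero (Finset.card_ne_zero_of_mem hp)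
    have := finrank_vectorSpan_image_finset_le ℝ (id : EuclideanSpace ℝ (Fin N) → _) s hn
    rw [Finset.image_id] at this
    exact this.trans (by omega)
  exact_mod_cast hfr

/-- General-position construction from the proof of Deformation Theorem A: if `K` is a
finite simplicial complex of dimension at most `k` in `ℝᴺ` and `f : |K| → ℝ^{k+1}` is
continuous, then for every `ε > 0` there is a continuous map `a : |K| → ℝ^{k+1}` with
`‖a(x)‖ < ε` and `a(x) ≠ f(x)` for every `x`. -/
theorem stmt_10 (k N : ℕ) (hN : 1 ≤ N)
    (K : Geometry.SimplicialComplex ℝ (EuclideanSpace ℝ (Fin N)))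
    (hfin : K.faces.Finite)
    (hdim : ∀ s ∈ K.faces, s.card ≤ k + 1)
    (f : K.space → EuclideanSpace ℝ (Fin (k + 1))) (hf : Continuous f) :
    ∀ ε : ℝ, 0 < ε →
      ∃ a : K.space → EuclideanSpace ℝ (Fin (k + 1)),
        Continuous a ∧ ∀ x : K.space, ‖a x‖ < ε ∧ a x ≠ f x := by
  intro ε hε
  have hclosed : IsClosed K.space :=
    hfin.isClosed_biUnion fun s _ => (s.finite_toSet.isCompact_convexHull ℝ).isClosed
  have hdimK : dimH K.space ≤ k := by
    unfold Geometry.SimplicialComplex.space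
    rw [dimH_bUnion hfin.countable]
    exact iSup₂_le fun s hs => dimH_convexHull_finset_le s (hdim s hs)
  obtain ⟨F, hF⟩ := ContinuousMap.exists_restrict_eq hclosed ⟨f, hf⟩
  have hFf : ∀ x : K.space, F x = f x := fun x => DFunLike.congr_fun hF x
  obtain ⟨g, hg, hgF, -⟩ := F.continuous.exists_contDiff_approx 1 (ε := fun _ => ε / 2)
    continuous_const (fun _ => half_pos hε)
  have hdense : Dense (g '' K.space)ᶜ := by
    refine (hg.contDiffOn (s := Set.univ)).dense_compl_image_of_dimH_lt_finrank convex_univ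
      (Set.subset_univ _) (hdimK.trans_lt ?_)
    rw [finrank_euclideanSpace_fin]
    exact_mod_cast Nat.lt_succ_self k
  obtain ⟨v, hv, hvε⟩ := hdense.exists_dist_lt 0 (half_pos hε)
  refine ⟨fun x => f x - g x + v,
    (hf.sub (hg.continuous.comp continuous_subtype_val)).add continuous_const, fun x => ⟨?_, ?_⟩⟩
  · have h1 : ‖f x - g x‖ < ε / 2 := by
      rw [← hFf x, ← dist_eq_norm, dist_comm]
      exact hgF x
    have h2 : ‖v‖ < ε / 2 := by simpa using hvε
    linarith [norm_add_le (f x - g x) v]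
  · intro h
    refine hv ⟨x, x.2, ?_⟩
    have h' : v - g x = 0 := by
      calc v - g x = (f x - g x + v) - f x := by abel
        _ = 0 := sub_eq_zero.2 h
    exact (sub_eq_zero.1 h').symm
end
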